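/- arXiv:2401.11494 — 2 statements merged into one kernel-verified Lean document; each statement's English description precedes it below -/
import Mathlib

section
/- Let A, B ∈ ℂ^{m×n}, and let X ∈ ℂ^{n×m} be the Moore–Penrose inverse of A and Y ∈ ℂ^{n×m} be the Moore–Penrose inverse of B. If A ≤⁻ B, then AX ≤⁻ BY. -/
open Matrix

noncomputable section

/-- Column space of a complex matrix: the range of `x ↦ M x`. -/
def colSpace {m n : ℕ} (M : Matrix (Fin m) (Fin n) ℂ) : Submodule ℂ (Fin m → ℂ) :=
  LinearMap.range M.mulVecLin

/-- `X` is the Moore–Penrose inverse of `M`. -/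
def IsMP {m n : ℕ} (M : Matrix (Fin m) (Fin n) ℂ) (X : Matrix (Fin n) (Fin m) ℂ) : Prop :=
  M * X * M = M ∧ X * M * X = X ∧ (M * X)ᴴ = M * X ∧ (X * M)ᴴ = X * M

/-- Diamond partial order: `R(A) ⊆ R(B)`, `R(A*) ⊆ R(B*)` and `A B* A = A A* A`. -/
def diamondLE {m n : ℕ} (A B : Matrix (Fin m) (Fin n) ℂ) : Prop :=
  colSpace A ≤ colSpace B ∧ colSpace Aᴴ ≤ colSpace Bᴴ ∧ A * Bᴴ * A = A * Aᴴ * A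

/-- Star partial order: `A* A = A* B` and `A A* = B A*`. -/
def starLE {m n : ℕ} (A B : Matrix (Fin m) (Fin n) ℂ) : Prop :=
  Aᴴ * A = Aᴴ * B ∧ A * Aᴴ = B * Aᴴ

/-- Minus partial order: there is an inner inverse `G` of `A` with `G A = G B` and `A G = B G`. -/
def minusLE {m n : ℕ} (A B : Matrix (Fin m) (Fin n) ℂ) : Prop :=
  ∃ G : Matrix (Fin n) (Fin m) ℂ, A * G * A = A ∧ G * A = G * B ∧ A * G = B * G

/-- Space pre-order: `R(A) ⊆ R(B)` and `R(A*) ⊆ R(B*)`. -/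
def spaceLE {m n : ℕ} (A B : Matrix (Fin m) (Fin n) ℂ) : Prop :=
  colSpace A ≤ colSpace B ∧ colSpace Aᴴ ≤ colSpace Bᴴ

/-- Left star partial order: `A* A = A* B` and `R(A) ⊆ R(B)`. -/
def leftStarLE {m n : ℕ} (A B : Matrix (Fin m) (Fin n) ℂ) : Prop :=
  Aᴴ * A = Aᴴ * B ∧ colSpace A ≤ colSpace B

/-- Right star partial order: `A A* = B A*` and `R(A*) ⊆ R(B*)`. -/
def rightStarLE {m n : ℕ} (A B : Matrix (Fin m) (Fin n) ℂ) : Prop :=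
  A * Aᴴ = B * Aᴴ ∧ colSpace Aᴴ ≤ colSpace Bᴴ

/-- The canonical equivalence `Fin r ⊕ Fin (n - r) ≃ Fin n` when `r ≤ n`. -/
def finPairEquiv {r n : ℕ} (h : r ≤ n) : Fin r ⊕ Fin (n - r) ≃ Fin n :=
  finSumFinEquiv.trans (finCongr (Nat.add_sub_cancel' h))

/-- The canonical equivalence `(Fin t ⊕ Fin (r - t)) ⊕ Fin (m - r) ≃ Fin m`
when `t ≤ r ≤ m`. -/
def finTriEquiv {t r m : ℕ} (ht : t ≤ r) (hr : r ≤ m) :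
    (Fin t ⊕ Fin (r - t)) ⊕ Fin (m - r) ≃ Fin m :=
  (Equiv.sumCongr (finPairEquiv ht) (Equiv.refl (Fin (m - r)))).trans (finPairEquiv hr)

/-!
If `A = A G A` and `A G = B G`, then `A = B (G A)`, so `R(A) ⊆ R(B)` and the orthogonal projectors
satisfy `P_B P_A = P_A`. Taking adjoints gives `P_A P_B = P_A` as well, so `P_A` itself is the inner
inverse witnessing `P_A ≤⁻ P_B`.
-/

variable {R m n p : Type*} [Fintype m] [Fintype n] [Fintype p]

/-- The relation defining the minus partial order, over an arbitrary semiring and arbitrary finite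
index types; on complex matrices indexed by `Fin` it is `minusLE`. -/
def IsMinusLE [NonUnitalNonAssocSemiring R] (A B : Matrix m n R) : Prop :=
  ∃ G : Matrix n m R, A * G * A = A ∧ G * A = G * B ∧ A * G = B * G

/-- `X` is a least-squares inverse, or `{1,3}`-inverse, of `A`. These are the two Penrose equations
which, over `ℂ`, make `A * X` the orthogonal projector onto the column space of `A`. -/
structure IsLeastSquaresInverse [NonUnitalNonAssocSemiring R] [StarRing R]
    (A : Matrix m n R) (X : Matrix n m R) : Prop where
  mul_mul_self : A * X * A = A
  isHermitian : (A * X).IsHermitian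

theorem minusLE_iff_isMinusLE {m n : ℕ} {A B : Matrix (Fin m) (Fin n) ℂ} :
    minusLE A B ↔ IsMinusLE A B :=
  Iff.rfl

theorem IsMP.isLeastSquaresInverse {m n : ℕ} {A : Matrix (Fin m) (Fin n) ℂ}
    {X : Matrix (Fin n) (Fin m) ℂ} (h : IsMP A X) : IsLeastSquaresInverse A X :=
  ⟨h.1, h.2.2.1⟩

theorem isMinusLE_of_isIdempotentElem [NonUnitalNonAssocSemiring R] {P Q : Matrix m m R}
    (hP : IsIdempotentElem P) (hPQ : P * Q = P) (hQP : Q * P = P) : IsMinusLE P Q :=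
  ⟨P, by rw [hP.eq, hP.eq], by rw [hP.eq, hPQ], by rw [hP.eq, hQP]⟩

theorem mul_eq_left_of_isSelfAdjoint {S : Type*} [Mul S] [StarMul S] {a b : S}
    (ha : IsSelfAdjoint a) (hb : IsSelfAdjoint b) (hba : b * a = a) : a * b = a := by
  simpa only [star_mul, ha.star_eq, hb.star_eq] using congrArg star hba

section NonUnitalSemiring

variable [NonUnitalSemiring R]

theorem IsMinusLE.exists_eq_mul {A B : Matrix m n R} (h : IsMinusLE A B) :
    ∃ C : Matrix n n R, A = B * C := by
  obtain ⟨G, hAGA, -, hAG⟩ := h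
  exact ⟨G * A, by rw [← Matrix.mul_assoc, ← hAG, hAGA]⟩

variable [StarRing R]

theorem IsLeastSquaresInverse.isStarProjection_mul {A : Matrix m n R} {X : Matrix n m R}
    (h : IsLeastSquaresInverse A X) : IsStarProjection (A * X) where
  isIdempotentElem := by rw [IsIdempotentElem, ← Matrix.mul_assoc, h.mul_mul_self]
  isSelfAdjoint := h.isHermitian.isSelfAdjoint

theorem IsLeastSquaresInverse.mul_mul_eq_iff_exists_eq_mul {q : Type*} {B : Matrix m n R}
    {Y : Matrix n m R} (h : IsLeastSquaresInverse B Y) {A : Matrix m q R} :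
    B * Y * A = A ↔ ∃ C : Matrix n q R, A = B * C := by
  constructor
  · intro hA
    exact ⟨Y * A, by rw [← Matrix.mul_assoc, hA]⟩
  · rintro ⟨C, rfl⟩
    rw [← Matrix.mul_assoc, h.mul_mul_self]

theorem minus_le_projectors_general {A : Matrix m n R} {B : Matrix m p R} {X : Matrix n m R}
    {Y : Matrix p m R} (hX : IsLeastSquaresInverse A X) (hY : IsLeastSquaresInverse B Y)
    (h : ∃ C : Matrix p n R, A = B * C) : IsMinusLE (A * X) (B * Y) := by
  have hP : IsStarProjection (A * X) := hX.isStarProjection_mul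
  have hQ : IsStarProjection (B * Y) := hY.isStarProjection_mul
  have hQP : B * Y * (A * X) = A * X := by
    rw [← Matrix.mul_assoc, hY.mul_mul_eq_iff_exists_eq_mul.mpr h]
  have hPQ : A * X * (B * Y) = A * X :=
    mul_eq_left_of_isSelfAdjoint hP.isSelfAdjoint hQ.isSelfAdjoint hQP
  exact isMinusLE_of_isIdempotentElem hP.isIdempotentElem hPQ hQP

end NonUnitalSemiring

theorem minus_le_projectors {m n : ℕ} (A B : Matrix (Fin m) (Fin n) ℂ)
    (X Y : Matrix (Fin n) (Fin m) ℂ) (hX : IsMP A X) (hY : IsMP B Y)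
    (h : minusLE A B) : minusLE (A * X) (B * Y) :=
  minusLE_iff_isMinusLE.mpr <| minus_le_projectors_general hX.isLeastSquaresInverse
    hY.isLeastSquaresInverse (minusLE_iff_isMinusLE.mp h).exists_eq_mul
end
end

section
/- Let A, B ∈ ℂ^{m×n}. If A ≤* B under the right star partial order (i.e., AA* = BA* and R(A*) ⊆ R(B*)), then A ≤⋄ B. -/
open Matrix

noncomputable section

section Semiring

variable {l m n R : Type*} [Fintype n]

theorem range_mulVecLin_mul_le [Fintype m] [CommSemiring R] (M : Matrix l m R)
    (N : Matrix m n R) :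
    LinearMap.range (M * N).mulVecLin ≤ LinearMap.range M.mulVecLin := by
  rw [mulVecLin_mul]
  exact LinearMap.range_comp_le_range _ _

theorem mul_conjTranspose_eq_of_self_mul_conjTranspose_eq [NonUnitalSemiring R] [StarRing R]
    {A B : Matrix m n R} (h : A * Aᴴ = B * Aᴴ) : A * Bᴴ = A * Aᴴ :=
  calc
    A * Bᴴ = (B * Aᴴ)ᴴ := by rw [conjTranspose_mul, conjTranspose_conjTranspose]
    _ = (A * Aᴴ)ᴴ := by rw [h]
    _ = A * Aᴴ := (isHermitian_mul_conjTranspose_self A).eq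

end Semiring

section StarOrderedField

variable {k m n R : Type*} [Fintype n]
  [Field R] [PartialOrder R] [StarRing R] [StarOrderedRing R]

theorem range_mulVecLin_self_mul_conjTranspose [Fintype m] (A : Matrix m n R) :
    LinearMap.range (A * Aᴴ).mulVecLin = LinearMap.range A.mulVecLin :=
  Submodule.eq_of_le_of_finrank_eq (range_mulVecLin_mul_le A Aᴴ) (rank_self_mul_conjTranspose A)

theorem range_mulVecLin_le_of_self_mul_conjTranspose_eq_mul [Fintype k] [Finite m]
    {A : Matrix m n R} {B : Matrix m k R} {C : Matrix k m R} (h : A * Aᴴ = B * C) :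
    LinearMap.range A.mulVecLin ≤ LinearMap.range B.mulVecLin := by
  have := Fintype.ofFinite m
  calc
    LinearMap.range A.mulVecLin = LinearMap.range (A * Aᴴ).mulVecLin :=
      (range_mulVecLin_self_mul_conjTranspose A).symm
    _ = LinearMap.range (B * C).mulVecLin := by rw [h]
    _ ≤ LinearMap.range B.mulVecLin := range_mulVecLin_mul_le B C

theorem right_star_implies_diamond_general [Fintype m] {A B : Matrix m n R}
    (h_mul : A * Aᴴ = B * Aᴴ)
    (h_range : LinearMap.range Aᴴ.mulVecLin ≤ LinearMap.range Bᴴ.mulVecLin) :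
    LinearMap.range A.mulVecLin ≤ LinearMap.range B.mulVecLin ∧
      LinearMap.range Aᴴ.mulVecLin ≤ LinearMap.range Bᴴ.mulVecLin ∧
      A * Bᴴ * A = A * Aᴴ * A :=
  ⟨range_mulVecLin_le_of_self_mul_conjTranspose_eq_mul h_mul, h_range,
    congrArg (· * A) (mul_conjTranspose_eq_of_self_mul_conjTranspose_eq h_mul)⟩

end StarOrderedField

theorem right_star_implies_diamond {m n : ℕ} (A B : Matrix (Fin m) (Fin n) ℂ)
    (h : rightStarLE A B) : diamondLE A B := by
  open scoped ComplexOrder in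
  exact right_star_implies_diamond_general h.1 h.2
end
end
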